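/- arXiv:1404.7694 — 2 statements merged into one kernel-verified Lean document; each statement's English description precedes it below -/
import Mathlib

section
/- Let d ≥ 2 be an integer and let x₁,…,x_d be pairwise distinct positive real numbers. With e₁ = x₁+⋯+x_d and q(τ) = ∏_{i=1}^d (τ + x_i), the subentropy satisfies the half-axis integral formula Q(x₁,…,x_d) = ∫₀^∞ [ 1 − τ^d/q(τ) − e₁/(τ+1) ] dτ, where the integral is over τ ∈ (0,∞). -/
open MeasureTheory Real

/-- Elementary building block of the half-axis formula. -/
lemma half_axis_aux (a : ℝ) (ha : 0 < a) :
    IntegrableOn (fun τ : ℝ => 1 / (τ + a) - 1 / (τ + 1)) (Set.Ioi 0) ∧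
      ∫ τ in Set.Ioi (0 : ℝ), (1 / (τ + a) - 1 / (τ + 1)) = -Real.log a := by
  have hderiv : ∀ τ ∈ Set.Ici (0 : ℝ),
      HasDerivAt (fun τ : ℝ => Real.log (τ + a) - Real.log (τ + 1))
        (1 / (τ + a) - 1 / (τ + 1)) τ := by
    intro τ hτ
    have hτ' : (0 : ℝ) ≤ τ := hτ
    exact (((hasDerivAt_id τ).add_const a).log (by simp; positivity)).sub
      (((hasDerivAt_id τ).add_const 1).log (by simp; positivity))
  have hlim : Filter.Tendsto (fun τ : ℝ => Real.log (τ + a) - Real.log (τ + 1))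
      Filter.atTop (nhds 0) := by
    have h1 : Filter.Tendsto (fun τ : ℝ => 1 + (a - 1) / (τ + 1)) Filter.atTop (nhds (1 + 0)) :=
      tendsto_const_nhds.add (tendsto_const_nhds.div_atTop
        (Filter.tendsto_atTop_add_const_right _ _ Filter.tendsto_id))
    rw [add_zero] at h1
    have h2 := h1.log one_ne_zero
    rw [Real.log_one] at h2
    refine h2.congr' ?_
    filter_upwards [Filter.eventually_ge_atTop (0 : ℝ)] with τ hτ
    rw [← Real.log_div (by positivity) (by positivity)]
    congr 1
    field_simp
    ring
  rcases le_total a 1 with h | h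
  · have hs : ∀ τ ∈ Set.Ioi (0 : ℝ), 0 ≤ 1 / (τ + a) - 1 / (τ + 1) := by
      intro τ hτ
      have hτ' : (0 : ℝ) < τ := hτ
      exact sub_nonneg.2 (one_div_le_one_div_of_le (by positivity) (by linarith))
    refine ⟨integrableOn_Ioi_deriv_of_nonneg' hderiv hs hlim, ?_⟩
    rw [integral_Ioi_of_hasDerivAt_of_nonneg' hderiv hs hlim]
    simp
  · have hs : ∀ τ ∈ Set.Ioi (0 : ℝ), 1 / (τ + a) - 1 / (τ + 1) ≤ 0 := by
      intro τ hτ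
      have hτ' : (0 : ℝ) < τ := hτ
      exact sub_nonpos.2 (one_div_le_one_div_of_le (by positivity) (by linarith))
    refine ⟨integrableOn_Ioi_deriv_of_nonpos' hderiv hs hlim, ?_⟩
    rw [integral_Ioi_of_hasDerivAt_of_nonpos' hderiv hs hlim]
    simp

open Polynomial in
/-- Partial fractions, and the sum of the residues. -/
lemma half_axis_partial (d : ℕ) (hd : 2 ≤ d) (x : Fin d → ℝ)
    (hx : ∀ i, 0 < x i) (hdist : ∀ i j, i ≠ j → x i ≠ x j) :
    (∑ i, x i = ∑ i, x i ^ d / ∏ j ∈ Finset.univ.erase i, (x i - x j)) ∧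
    ∀ τ : ℝ, 0 < τ → 1 - τ ^ d / (∏ i, (τ + x i)) =
      ∑ i, (x i ^ d / ∏ j ∈ Finset.univ.erase i, (x i - x j)) * (1 / (τ + x i)) := by
  have hinj : Set.InjOn x (Finset.univ : Finset (Fin d)) := by
    intro i _ j _ h
    by_contra hne
    exact hdist i j hne h
  set P : ℝ[X] := X ^ d - Lagrange.nodal Finset.univ x with hP
  have hdeg : P.degree < (Finset.univ : Finset (Fin d)).card := by
    have := degree_sub_lt (p := (X : ℝ[X]) ^ d) (q := Lagrange.nodal Finset.univ x)
      (by simp [Lagrange.degree_nodal]) (by simp)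
      (by rw [(Lagrange.nodal_monic).leadingCoeff]; simp)
    simpa using this
  have heval : ∀ i, P.eval (x i) = x i ^ d := by
    intro i
    simp [hP, Lagrange.eval_nodal_at_node (v := x) (Finset.mem_univ i)]
  constructor
  · have h := Lagrange.coeff_eq_sum hinj hdeg
    simp only [heval] at h
    rw [← h, hP, coeff_sub, Lagrange.nodal_eq,
      prod_X_sub_C_coeff_card_pred _ _ (by simp; omega), coeff_X_pow]
    rw [if_neg (by simp; omega)]
    simp
  · intro τ hτ
    have hne : ∀ i ∈ (Finset.univ : Finset (Fin d)), -τ ≠ x i := by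
      intro i _ h
      have := hx i
      linarith
    have h := Lagrange.eval_interpolate_not_at_node (fun i => P.eval (x i)) hne
    rw [← Lagrange.eq_interpolate hinj hdeg] at h
    have hq : (Lagrange.nodal Finset.univ x).eval (-τ) = (-1) ^ d * ∏ i, (τ + x i) := by
      rw [Lagrange.eval_nodal]
      have : ∀ i, -τ - x i = (-1) * (τ + x i) := fun i => by ring
      simp only [this, Finset.prod_mul_distrib]
      simp
    have hqpos : 0 < ∏ i, (τ + x i) := Finset.prod_pos fun i _ => by have := hx i; positivity
    have hsum : ∑ i, Lagrange.nodalWeight Finset.univ x i * (-τ - x i)⁻¹ * P.eval (x i) =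
        -∑ i, (x i ^ d / ∏ j ∈ Finset.univ.erase i, (x i - x j)) * (1 / (τ + x i)) := by
      rw [← Finset.sum_neg_distrib]
      refine Finset.sum_congr rfl fun i _ => ?_
      rw [heval, Lagrange.nodalWeight, Finset.prod_inv_distrib,
        show -τ - x i = -(τ + x i) by ring, inv_neg]
      ring
    rw [hsum] at h
    rw [hP, eval_sub, hq, eval_pow, eval_X, neg_pow] at h
    have h1 : ((-1 : ℝ) ^ d) ≠ 0 := by simp
    have h2 : τ ^ d - ∏ i, (τ + x i) = (∏ i, (τ + x i)) *
        -∑ i, (x i ^ d / ∏ j ∈ Finset.univ.erase i, (x i - x j)) * (1 / (τ + x i)) := by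
      apply mul_left_cancel₀ h1
      linear_combination h
    have h3 : τ ^ d / (∏ i, (τ + x i)) = 1 -
        ∑ i, (x i ^ d / ∏ j ∈ Finset.univ.erase i, (x i - x j)) * (1 / (τ + x i)) := by
      rw [div_eq_iff hqpos.ne']
      linear_combination h2
    rw [h3]
    ring

/-- **Half-axis formula for the subentropy.**
For `d ≥ 2` and pairwise distinct positive reals `x₁, …, x_d`, with
`e₁ = Σ xᵢ` and `q(τ) = ∏ (τ + xᵢ)`, the subentropy
`Q(x) = −Σᵢ (xᵢ^d / ∏_{j≠i}(xᵢ−xⱼ)) ln xᵢ` satisfies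
`Q(x) = ∫₀^∞ [ 1 − τ^d/q(τ) − e₁/(τ+1) ] dτ`. -/
theorem subentropy_half_axis_formula (d : ℕ) (hd : 2 ≤ d) (x : Fin d → ℝ)
    (hx : ∀ i, 0 < x i) (hdist : ∀ i j, i ≠ j → x i ≠ x j) :
    (-∑ i, (x i ^ d / ∏ j ∈ Finset.univ.erase i, (x i - x j)) * Real.log (x i)) =
      ∫ τ in Set.Ioi (0 : ℝ),
        (1 - τ ^ d / (∏ i, (τ + x i)) - (∑ i, x i) / (τ + 1)) := by
  obtain ⟨hsum, hpf⟩ := half_axis_partial d hd x hx hdist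
  have hcongr : ∀ τ ∈ Set.Ioi (0 : ℝ),
      1 - τ ^ d / (∏ i, (τ + x i)) - (∑ i, x i) / (τ + 1) =
      ∑ i, (x i ^ d / ∏ j ∈ Finset.univ.erase i, (x i - x j)) *
        (1 / (τ + x i) - 1 / (τ + 1)) := by
    intro τ hτ
    rw [hpf τ hτ, hsum]
    simp only [mul_sub, Finset.sum_sub_distrib, ← Finset.sum_mul]
    ring
  rw [setIntegral_congr_fun measurableSet_Ioi hcongr, integral_finsetSum]
  · rw [← Finset.sum_neg_distrib]
    refine Finset.sum_congr rfl fun i _ => ?_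
    rw [integral_const_mul, (half_axis_aux (x i) (hx i)).2]
    ring
  · intro i _
    exact (half_axis_aux (x i) (hx i)).1.const_mul _
end

section
/- Let d ≥ 2 be an integer, let e₁,…,e_d be positive reals, q_e(τ) = τ^d + Σ_{k=1}^d e_k τ^{d−k}, and let F(e₁,…,e_d) = ∫₀^∞ [ d − τ·q_e′(τ)/q_e(τ) − e₁/(τ+1) ] dτ be the entropy as a function of the elementary symmetric polynomials. Then for every integer m ≥ 2 and every choice of indices i₁,…,i_m ∈ {1,…,d}, the m-th mixed partial derivative ∂^m F/∂e_{i₁}⋯∂e_{i_m} at (e₁,…,e_d) equals (−1)^{m−1} (m−1)! ∫₀^∞ τ^{md − (i₁+⋯+i_m)} / q_e(τ)^m dτ. In particular, this mixed partial derivative depends only on the sum of the indices i₁+⋯+i_m. -/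
open MeasureTheory Real

/-- The polynomial `q_e(τ) = τ^d + Σ_{k=1}^d e_k τ^{d−k}`, where the coordinate
`i : Fin d` of `e` stores the elementary symmetric polynomial `e_{i+1}`. -/
noncomputable def qe (d : ℕ) (e : Fin d → ℝ) (τ : ℝ) : ℝ :=
  τ ^ d + ∑ i, e i * τ ^ (d - 1 - (i : ℕ))

/-- The entropy `H` as a function of the elementary symmetric polynomials:
`F(e) = ∫₀^∞ [ d − τ q_e'(τ)/q_e(τ) − e₁/(τ+1) ] dτ`. -/
noncomputable def entF (d : ℕ) (hd : 2 ≤ d) (e : Fin d → ℝ) : ℝ :=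
  ∫ τ in Set.Ioi (0 : ℝ),
    ((d : ℝ) - τ * deriv (qe d e) τ / qe d e τ - e ⟨0, by omega⟩ / (τ + 1))

lemma integrable_aux (Q : ℝ → ℝ) (hQc : Continuous Q) (c : ℝ) (hc : 0 < c) (n b : ℕ) (hb : b + 2 ≤ n)
    (hQ : ∀ τ, 0 < τ → c * (max 1 τ) ^ n ≤ Q τ) :
    IntegrableOn (fun τ => τ ^ b / Q τ) (Set.Ioi 0) := by
  have h1 : IntegrableOn (fun τ : ℝ => (2 / c) * (1 + τ ^ 2)⁻¹) (Set.Ioi 0) :=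
    (integrable_inv_one_add_sq.const_mul _).integrableOn
  refine Integrable.mono' h1 ?_ ?_
  · exact ((measurable_id.pow_const b).div hQc.measurable).aestronglyMeasurable
  · refine (ae_restrict_iff' measurableSet_Ioi).2 (Filter.Eventually.of_forall ?_)
    intro τ hτ
    have hτ : 0 < τ := hτ
    have hM1 : 1 ≤ max 1 τ := le_max_left _ _
    have hM2 : τ ≤ max 1 τ := le_max_right _ _
    have hQ' := hQ τ hτ
    set M := max 1 τ
    have hp : 0 < M ^ n := by positivity
    have hQpos : 0 < Q τ := lt_of_lt_of_le (by positivity) hQ'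
    rw [norm_of_nonneg (by positivity), ← div_eq_mul_inv, div_div, div_le_div_iff₀ hQpos (by positivity)]
    have h2 : τ ^ b ≤ M ^ n :=
      (pow_le_pow_left₀ hτ.le hM2 b).trans (pow_le_pow_right₀ hM1 (by omega))
    have h3 : τ ^ (b + 2) ≤ M ^ n :=
      (pow_le_pow_left₀ hτ.le hM2 _).trans (pow_le_pow_right₀ hM1 hb)
    have h4 : τ ^ b * (1 + τ ^ 2) ≤ 2 * M ^ n := by rw [pow_add] at h3; nlinarith
    calc τ ^ b * (c * (1 + τ ^ 2)) = c * (τ ^ b * (1 + τ ^ 2)) := by ring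
      _ ≤ c * (2 * M ^ n) := by gcongr
      _ = 2 * (c * M ^ n) := by ring
      _ ≤ 2 * Q τ := by gcongr

lemma qe_cont (d : ℕ) (e : Fin d → ℝ) : Continuous (qe d e) := by
  unfold qe; fun_prop

lemma qe_lower (d : ℕ) (hd : 2 ≤ d) (e : Fin d → ℝ) (he : ∀ i, 0 < e i) :
    ∃ c, 0 < c ∧ ∀ τ, 0 ≤ τ → c * (max 1 τ) ^ d ≤ qe d e τ := by
  let l : Fin d := ⟨d - 1, by omega⟩
  refine ⟨min 1 (e l), lt_min one_pos (he l), fun τ hτ => ?_⟩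
  have h0 : e l ≤ ∑ i, e i * τ ^ (d - 1 - (i : ℕ)) := by
    have := Finset.single_le_sum (f := fun i : Fin d => e i * τ ^ (d - 1 - (i : ℕ)))
      (fun i _ => by have := he i; positivity) (Finset.mem_univ l)
    simpa [l] using this
  have h1 : 0 ≤ τ ^ d := by positivity
  have h2 := he l
  unfold qe
  rcases le_total 1 τ with h | h
  · rw [max_eq_right h]
    have := min_le_left 1 (e l)
    nlinarith
  · rw [max_eq_left h]
    have := min_le_right 1 (e l)
    simp only [one_pow, mul_one]
    linarith

lemma qe_pos' (d : ℕ) (hd : 2 ≤ d) (e : Fin d → ℝ) (he : ∀ i, 0 < e i) (τ : ℝ) (hτ : 0 ≤ τ) :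
    0 < qe d e τ := by
  obtain ⟨c, hc, hq⟩ := qe_lower d hd e he
  have := hq τ hτ
  exact lt_of_lt_of_le (by positivity) this

lemma qe_pos (d : ℕ) (hd : 2 ≤ d) (e : Fin d → ℝ) (he : ∀ i, 0 < e i) (τ : ℝ) (hτ : 0 < τ) :
    0 < qe d e τ := qe_pos' d hd e he τ hτ.le

lemma integrable_J (d : ℕ) (hd : 2 ≤ d) (e : Fin d → ℝ) (he : ∀ i, 0 < e i) (m a : ℕ)
    (h : a + 2 ≤ m * d) : IntegrableOn (fun τ => τ ^ a / qe d e τ ^ m) (Set.Ioi 0) := by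
  obtain ⟨c, hc, hq⟩ := qe_lower d hd e he
  refine integrable_aux _ ((qe_cont d e).pow m) (c ^ m) (by positivity) (m * d) a h ?_
  intro τ hτ
  have := pow_le_pow_left₀ (by positivity) (hq τ hτ.le) m
  rwa [mul_pow, ← pow_mul, mul_comm d m] at this

lemma integrable_K0 (d : ℕ) (hd : 2 ≤ d) (e : Fin d → ℝ) (he : ∀ i, 0 < e i) :
    IntegrableOn (fun τ => τ ^ (d - 1) / qe d e τ ^ 1 - 1 / (τ + 1)) (Set.Ioi 0) := by
  obtain ⟨c, hc, hq⟩ := qe_lower d hd e he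
  have key : ∀ b, b + 2 ≤ d + 1 →
      IntegrableOn (fun τ => τ ^ b / (qe d e τ * (τ + 1))) (Set.Ioi 0) := by
    intro b hb
    refine integrable_aux _ ((qe_cont d e).mul (by fun_prop)) c hc (d + 1) b hb ?_
    intro τ hτ
    rw [pow_succ, ← mul_assoc]
    have := qe_pos d hd e he τ hτ
    exact mul_le_mul (hq τ hτ.le) (max_le (by linarith) (by linarith)) (by positivity) this.le
  have h2 : IntegrableOn (fun τ => τ ^ (d - 1) / (qe d e τ * (τ + 1)) -
      ∑ i, e i * (τ ^ (d - 1 - (i : ℕ)) / (qe d e τ * (τ + 1)))) (Set.Ioi 0) := by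
    refine (key (d - 1) (by omega)).sub (integrable_finsetSum _ fun i _ => ?_)
    exact (key _ (by omega)).const_mul _
  refine h2.congr_fun ?_ measurableSet_Ioi
  intro τ hτ
  have hτ : 0 < τ := hτ
  have hp := qe_pos d hd e he τ hτ
  have hs : ∑ i, e i * (τ ^ (d - 1 - (i : ℕ)) / (qe d e τ * (τ + 1))) =
     (qe d e τ - τ ^ d) / (qe d e τ * (τ + 1)) := by
    simp only [← mul_div_assoc]
    rw [← Finset.sum_div]; simp [qe]
  simp only
  rw [hs, pow_one]
  have hd' : τ ^ d = τ ^ (d - 1) * τ := by rw [← pow_succ]; congr 1; omega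
  field_simp
  rw [hd']; ring

/-- Regularised moment integrals. -/
noncomputable def JJ (d : ℕ) (g : ℝ → ℝ) (m a : ℕ) (e : Fin d → ℝ) : ℝ :=
  ∫ τ in Set.Ioi (0 : ℝ), (τ ^ a / qe d e τ ^ m - g τ)

/-- The coordinate functionals. -/
noncomputable abbrev pr (d : ℕ) (i : Fin d) : (Fin d → ℝ) →L[ℝ] ℝ :=
  ContinuousLinearMap.proj (R := ℝ) (φ := fun _ => ℝ) i

lemma qe_fderiv (d : ℕ) (e : Fin d → ℝ) (τ : ℝ) :
    HasFDerivAt (fun x => qe d x τ) (∑ i : Fin d, τ ^ (d - 1 - (i : ℕ)) • pr d i) e := by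
  unfold qe
  refine HasFDerivAt.const_add _ (HasFDerivAt.fun_sum fun i _ => ?_)
  exact ((pr d i).hasFDerivAt).mul_const _

lemma scalar_deriv (m : ℕ) (hm : 1 ≤ m) (c y : ℝ) (hy : 0 < y) :
    HasDerivAt (fun y => c / y ^ m) (-(m : ℝ) * (c / y ^ (m + 1))) y := by
  obtain ⟨k, rfl⟩ : ∃ k, m = k + 1 := ⟨m - 1, by omega⟩
  have h := (((hasDerivAt_pow (k + 1) y)).inv (by positivity)).const_mul c
  refine h.congr_deriv ?_
  simp only [Nat.add_sub_cancel]
  field_simp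
  ring

lemma integrand_fderiv (d : ℕ) (m a : ℕ) (hm : 1 ≤ m) (g : ℝ → ℝ) (x : Fin d → ℝ) (τ : ℝ)
    (hq : 0 < qe d x τ) :
    HasFDerivAt (fun x => τ ^ a / qe d x τ ^ m - g τ)
      (∑ i : Fin d, (-(m : ℝ) * (τ ^ (a + (d - 1 - (i : ℕ))) / qe d x τ ^ (m + 1))) • pr d i) x := by
  have h := ((scalar_deriv m hm (τ ^ a) _ hq).comp_hasFDerivAt x (qe_fderiv d x τ)).sub_const (g τ)
  refine h.congr_fderiv ?_
  rw [Finset.smul_sum]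
  refine Finset.sum_congr rfl fun i _ => ?_
  rw [smul_smul]
  congr 1
  rw [pow_add]; ring

lemma qe_mono (d : ℕ) (x y : Fin d → ℝ) (h : ∀ i, x i ≤ y i) (τ : ℝ) (hτ : 0 < τ) :
    qe d x τ ≤ qe d y τ := by
  unfold qe
  gcongr with i
  exact h i

lemma JJ_fderiv (d : ℕ) (hd : 2 ≤ d) (g : ℝ → ℝ) (m a : ℕ) (hm : 1 ≤ m) (ha : a + 1 ≤ m * d)
    (hgm : Measurable g) (e : Fin d → ℝ) (he : ∀ i, 0 < e i)
    (hg : IntegrableOn (fun τ => τ ^ a / qe d e τ ^ m - g τ) (Set.Ioi 0)) :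
    HasFDerivAt (JJ d g m a)
      (∑ i : Fin d, (-(m : ℝ) * JJ d (fun _ => 0) (m + 1) (a + (d - 1 - (i : ℕ))) e) • pr d i) e := by
  let e' : Fin d → ℝ := fun i => e i / 2
  have he' : ∀ i, 0 < e' i := fun i => half_pos (he i)
  let s : Set (Fin d → ℝ) := Set.pi Set.univ fun i => Set.Ioi (e' i)
  have hs : s ∈ nhds e := by
    refine (isOpen_set_pi Set.finite_univ fun i _ => isOpen_Ioi).mem_nhds ?_
    intro i _
    exact half_lt_self (he i)
  have hle : ∀ i : Fin d, (a + (d - 1 - (i : ℕ))) + 2 ≤ (m + 1) * d := by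
    intro i; rw [add_mul]; omega
  have hint : ∀ x : Fin d → ℝ, (∀ i, 0 < x i) → ∀ i : Fin d, IntegrableOn
      (fun τ => τ ^ (a + (d - 1 - (i : ℕ))) / qe d x τ ^ (m + 1)) (Set.Ioi 0) :=
    fun x hx i => integrable_J d hd x hx _ _ (hle i)
  have key := hasFDerivAt_integral_of_dominated_of_fderiv_le (𝕜 := ℝ)
    (μ := volume.restrict (Set.Ioi (0 : ℝ)))
    (F := fun x τ => τ ^ a / qe d x τ ^ m - g τ)
    (F' := fun x τ => ∑ i : Fin d,
      (-(m : ℝ) * (τ ^ (a + (d - 1 - (i : ℕ))) / qe d x τ ^ (m + 1))) • pr d i)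
    (bound := fun τ => ∑ i : Fin d,
      ((m : ℝ) * (τ ^ (a + (d - 1 - (i : ℕ))) / qe d e' τ ^ (m + 1))) * ‖pr d i‖)
    (x₀ := e) hs ?_ hg ?_ ?_ ?_ ?_
  · refine key.congr_fderiv ?_
    rw [integral_finsetSum]
    · refine Finset.sum_congr rfl fun i _ => ?_
      rw [integral_smul_const, integral_const_mul]
      simp only [JJ, sub_zero]
    · intro i _
      exact ((hint e he i).const_mul _).smul_const _
  · refine Filter.Eventually.of_forall fun x => ?_
    exact (((measurable_id.pow_const a).div ((qe_cont d x).measurable.pow_const m)).sub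
      hgm).aestronglyMeasurable
  · exact (integrable_finsetSum _ fun i _ =>
      ((hint e he i).const_mul (-(m : ℝ))).smul_const (pr d i)).aestronglyMeasurable
  · refine (ae_restrict_iff' measurableSet_Ioi).2 (Filter.Eventually.of_forall ?_)
    intro τ hτ x hx
    have hτ : 0 < τ := hτ
    refine (norm_sum_le _ _).trans (Finset.sum_le_sum fun i _ => ?_)
    have hq' := qe_pos d hd e' he' τ hτ
    have hqq := qe_mono d e' x (fun i => (hx i (Set.mem_univ i)).le) τ hτ
    have hq : 0 < qe d x τ := hq'.trans_le hqq
    rw [norm_smul, norm_mul, norm_neg, Real.norm_natCast, Real.norm_of_nonneg (by positivity)]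
    gcongr
  · refine integrable_finsetSum _ fun i _ => ?_
    exact ((hint e' he' i).const_mul _).mul_const _
  · refine (ae_restrict_iff' measurableSet_Ioi).2 (Filter.Eventually.of_forall ?_)
    intro τ hτ x hx
    refine integrand_fderiv d m a hm g x τ (qe_pos d hd x (fun i => (he' i).trans (hx i (Set.mem_univ i))) τ hτ)

/-- The positive orthant. -/
def UU (d : ℕ) : Set (Fin d → ℝ) := Set.pi Set.univ fun _ => Set.Ioi 0

lemma UU_open (d : ℕ) : IsOpen (UU d) := isOpen_set_pi Set.finite_univ fun _ _ => isOpen_Ioi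

lemma mem_UU (d : ℕ) (e : Fin d → ℝ) : e ∈ UU d ↔ ∀ i, 0 < e i := by simp [UU]

lemma integrable_J0 (d : ℕ) (hd : 2 ≤ d) (e : Fin d → ℝ) (he : ∀ i, 0 < e i) (m a : ℕ)
    (h : a + 2 ≤ m * d) :
    IntegrableOn (fun τ => τ ^ a / qe d e τ ^ m - (fun _ => (0:ℝ)) τ) (Set.Ioi 0) := by
  simpa using integrable_J d hd e he m a h

lemma JJ_contDiff (d : ℕ) (hd : 2 ≤ d) (n : ℕ) : ∀ (g : ℝ → ℝ) (m a : ℕ) (_ : 1 ≤ m)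
    (_ : a + 1 ≤ m * d) (_ : Measurable g)
    (_ : ∀ e : Fin d → ℝ, (∀ i, 0 < e i) →
      IntegrableOn (fun τ => τ ^ a / qe d e τ ^ m - g τ) (Set.Ioi 0)),
    ContDiffOn ℝ n (JJ d g m a) (UU d) := by
  induction n with
  | zero =>
    intro g m a hm ha hgm hg
    refine contDiffOn_zero.2 fun e he => ?_
    rw [mem_UU] at he
    exact (JJ_fderiv d hd g m a hm ha hgm e he (hg e he)).continuousAt.continuousWithinAt
  | succ n ih =>
    intro g m a hm ha hgm hg
    have hF := fun e he => JJ_fderiv d hd g m a hm ha hgm e ((mem_UU d e).1 he)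
      (hg e ((mem_UU d e).1 he))
    push_cast
    rw [contDiffOn_succ_iff_fderiv_of_isOpen (UU_open d)]
    refine ⟨fun e he => (hF e he).differentiableAt.differentiableWithinAt, by simp, ?_⟩
    refine ContDiffOn.congr ?_ fun e he => (hF e he).fderiv
    refine ContDiffOn.sum fun i _ => ?_
    have hle : (a + (d - 1 - (i : ℕ))) + 2 ≤ (m + 1) * d := by rw [add_mul]; omega
    have hc : ContDiffOn ℝ n (fun e => -(m : ℝ) *
        JJ d (fun _ => 0) (m + 1) (a + (d - 1 - (i : ℕ))) e) (UU d) :=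
      contDiffOn_const.mul (ih _ _ _ (by omega) (by omega) measurable_const
        fun e he => integrable_J0 d hd e he _ _ hle)
    exact hc.smul contDiffOn_const

lemma qe_deriv (d : ℕ) (e : Fin d → ℝ) (τ : ℝ) :
    ∃ p, HasDerivAt (qe d e) p τ ∧
      τ * p = d * qe d e τ - ∑ k : Fin d, ((k : ℕ) + 1 : ℝ) * e k * τ ^ (d - 1 - (k : ℕ)) := by
  have hpow : ∀ n : ℕ, τ * ((n : ℝ) * τ ^ (n - 1)) = n * τ ^ n := by
    intro n
    rcases n with _ | n
    · simp
    · simp only [Nat.add_sub_cancel]; ring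
  refine ⟨d * τ ^ (d - 1) +
    ∑ i : Fin d, e i * (((d - 1 - (i : ℕ) : ℕ) : ℝ) * τ ^ (d - 1 - (i : ℕ) - 1)), ?_, ?_⟩
  · unfold qe
    refine (hasDerivAt_pow d τ).add (HasDerivAt.fun_sum fun i _ => ?_)
    exact (hasDerivAt_pow _ τ).const_mul _
  · unfold qe
    rw [mul_add, hpow, mul_add, add_sub_assoc, Finset.mul_sum, Finset.mul_sum,
      ← Finset.sum_sub_distrib]
    congr 1
    refine Finset.sum_congr rfl fun i _ => ?_
    rw [mul_left_comm, hpow]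
    have h1 : ((d - 1 - (i : ℕ) : ℕ) : ℝ) = d - 1 - (i : ℕ) := by
      rw [Nat.sub_sub, Nat.cast_sub (by omega)]; push_cast; ring
    rw [h1]; ring

/-- Integration by parts. -/
lemma ibp (d : ℕ) (hd : 2 ≤ d) (e : Fin d → ℝ) (he : ∀ i, 0 < e i) (i j : Fin d) :
    2 * ∑ k : Fin d, ((k : ℕ) + 1 : ℝ) * e k *
      JJ d (fun _ => 0) 3 ((d - 1 - (k : ℕ)) + (d - 1 - (i : ℕ)) + (d - 1 - (j : ℕ))) e =
    ((i : ℕ) + (j : ℕ) + 1 : ℝ) *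
      JJ d (fun _ => 0) 2 ((d - 1 - (i : ℕ)) + (d - 1 - (j : ℕ))) e := by
  set a := (d - 1 - (i : ℕ)) + (d - 1 - (j : ℕ)) with ha
  have hac : (a : ℝ) = 2 * d - 2 - (i : ℕ) - (j : ℕ) := by
    have : a + (i : ℕ) + (j : ℕ) + 2 = 2 * d := by omega
    have : (a : ℝ) + (i : ℕ) + (j : ℕ) + 2 = 2 * d := by exact_mod_cast this
    linarith
  have i2 := integrable_J d hd e he 2 a (by omega)
  have i3 : ∀ k : Fin d, IntegrableOn (fun τ => τ ^ ((d - 1 - (k : ℕ)) + (d - 1 - (i : ℕ)) +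
      (d - 1 - (j : ℕ))) / qe d e τ ^ 3) (Set.Ioi 0) :=
    fun k => integrable_J d hd e he 3 _ (by omega)
  have hsum := integrable_finsetSum Finset.univ
    (fun (k : Fin d) _ => (i3 k).const_mul (((k : ℕ) + 1 : ℝ) * e k))
  have h := integral_Ioi_of_hasDerivAt_of_tendsto' (a := 0) (m := 0)
    (f := fun τ => τ ^ (a + 1) / qe d e τ ^ 2)
    (f' := fun τ => -((i : ℕ) + (j : ℕ) + 1 : ℝ) * (τ ^ a / qe d e τ ^ 2) +
      2 * ∑ k : Fin d, ((k : ℕ) + 1 : ℝ) * e k * (τ ^ ((d - 1 - (k : ℕ)) + (d - 1 - (i : ℕ)) +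
      (d - 1 - (j : ℕ))) / qe d e τ ^ 3)) ?_ ?_ ?_
  · rw [integral_add (i2.const_mul _) (hsum.const_mul _), integral_const_mul, integral_const_mul,
      integral_finsetSum _ (fun (k : Fin d) _ => (i3 k).const_mul (((k : ℕ) + 1 : ℝ) * e k))] at h
    simp only [integral_const_mul] at h
    simp only [JJ, sub_zero]
    simp only [ne_eq, Nat.add_eq_zero_iff, one_ne_zero, and_false, not_false_eq_true, zero_pow,
      zero_div, sub_zero] at h
    linarith
  · intro τ hτ
    have hq := qe_pos' d hd e he τ hτ
    obtain ⟨p, hp, hpe⟩ := qe_deriv d e τ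
    have h1 := (hasDerivAt_pow (a + 1) τ).div (hp.pow 2) (pow_ne_zero 2 hq.ne')
    refine h1.congr_deriv ?_
    have hS : ∑ k : Fin d, ((k : ℕ) + 1 : ℝ) * e k * (τ ^ ((d - 1 - (k : ℕ)) + (d - 1 - (i : ℕ)) +
      (d - 1 - (j : ℕ))) / qe d e τ ^ 3) = (d * qe d e τ - τ * p) * τ ^ a / qe d e τ ^ 3 := by
      rw [hpe, sub_sub_cancel, Finset.sum_mul, Finset.sum_div]
      refine Finset.sum_congr rfl fun k _ => ?_
      rw [add_assoc, ← ha, pow_add]; ring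
    rw [hS]
    simp only [Pi.pow_apply, Nat.add_sub_cancel]
    push_cast
    rw [hac]
    field_simp
    ring
  · exact (i2.const_mul _).add (hsum.const_mul _)
  · have hb : Filter.Tendsto (fun τ : ℝ => τ⁻¹) Filter.atTop (nhds 0) := tendsto_inv_atTop_zero
    refine squeeze_zero' ?_ ?_ hb
    · filter_upwards [Filter.eventually_gt_atTop 0] with τ hτ
      have hq := qe_pos d hd e he τ hτ
      positivity
    · filter_upwards [Filter.eventually_ge_atTop 1] with τ hτ
      have hτ0 : 0 < τ := by linarith
      have hq := qe_pos d hd e he τ hτ0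
      have hqd : τ ^ d ≤ qe d e τ := by
        unfold qe
        have : 0 ≤ ∑ i, e i * τ ^ (d - 1 - (i : ℕ)) :=
          Finset.sum_nonneg (fun i _ => by have := he i; positivity)
        linarith
      rw [inv_eq_one_div, div_le_div_iff₀ (by positivity) hτ0, one_mul]
      calc τ ^ (a + 1) * τ = τ ^ (a + 2) := by ring
        _ ≤ τ ^ (d * 2) := pow_le_pow_right₀ hτ (by omega)
        _ = (τ ^ d) ^ 2 := pow_mul _ _ _
        _ ≤ _ := by gcongr

/-- The regularising functions. -/
noncomputable def gi (d : ℕ) (i : Fin d) : ℝ → ℝ :=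
  if (i : ℕ) = 0 then fun τ => 1 / (τ + 1) else fun _ => 0

lemma gi_meas (d : ℕ) (i : Fin d) : Measurable (gi d i) := by
  unfold gi; split_ifs <;> fun_prop

lemma gi_int (d : ℕ) (hd : 2 ≤ d) (i : Fin d) (e : Fin d → ℝ) (he : ∀ i, 0 < e i) :
    IntegrableOn (fun τ => τ ^ (d - 1 - (i : ℕ)) / qe d e τ ^ 1 - gi d i τ) (Set.Ioi 0) := by
  unfold gi
  split_ifs with h
  · rw [h]; exact integrable_K0 d hd e he
  · exact integrable_J0 d hd e he 1 _ (by omega)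

lemma entF_eq (d : ℕ) (hd : 2 ≤ d) (e : Fin d → ℝ) (he : ∀ i, 0 < e i) :
    entF d hd e = ∑ i : Fin d, ((i : ℕ) + 1 : ℝ) * (e i * JJ d (gi d i) 1 (d - 1 - (i : ℕ)) e) := by
  unfold JJ entF
  simp only [← integral_const_mul]
  rw [← integral_finsetSum]
  · refine setIntegral_congr_fun measurableSet_Ioi fun τ hτ => ?_
    have hq := qe_pos d hd e he τ hτ
    obtain ⟨p, hp, hpe⟩ := qe_deriv d e τ
    simp only [hp.deriv, hpe, mul_sub, Finset.sum_sub_distrib]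
    congr 1
    · rw [sub_div, mul_div_assoc, div_self hq.ne', mul_one, sub_sub_cancel, Finset.sum_div]
      refine Finset.sum_congr rfl fun i _ => ?_
      rw [pow_one]; ring
    · rw [Finset.sum_eq_single (⟨0, by omega⟩ : Fin d)]
      · simp [gi, div_eq_mul_inv]
      · intro b _ hb
        have : (b : ℕ) ≠ 0 := fun h => hb (Fin.ext h)
        simp [gi, this]
      · simp
  · intro i _
    exact ((gi_int d hd i e he).const_mul _).const_mul _

lemma entF_contDiff (d : ℕ) (hd : 2 ≤ d) (n : ℕ) : ContDiffOn ℝ n (entF d hd) (UU d) := by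
  refine ContDiffOn.congr ?_ fun e he => entF_eq d hd e ((mem_UU d e).1 he)
  refine ContDiffOn.sum fun i _ => ?_
  refine contDiffOn_const.mul (ContDiffOn.mul (pr d i).contDiff.contDiffOn ?_)
  exact JJ_contDiff d hd n _ _ _ le_rfl (by omega) (gi_meas d i) fun e he => gi_int d hd i e he

lemma fderiv_JJ_single (d : ℕ) (hd : 2 ≤ d) (m a : ℕ) (hm : 1 ≤ m) (ha : a + 2 ≤ m * d)
    (e : Fin d → ℝ) (he : ∀ i, 0 < e i) (i : Fin d) :
    DifferentiableAt ℝ (JJ d (fun _ => 0) m a) e ∧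
    fderiv ℝ (JJ d (fun _ => 0) m a) e (Pi.single i 1) =
      -(m : ℝ) * JJ d (fun _ => 0) (m + 1) (a + (d - 1 - (i : ℕ))) e := by
  have h := JJ_fderiv d hd (fun _ => 0) m a hm (by omega) measurable_const e he
    (integrable_J0 d hd e he m a ha)
  refine ⟨h.differentiableAt, ?_⟩
  rw [h.fderiv]
  simp [Pi.single_apply]

/-- First partial derivatives. -/
lemma fderiv_entF (d : ℕ) (hd : 2 ≤ d) (e : Fin d → ℝ) (he : ∀ i, 0 < e i) (i : Fin d) :
    fderiv ℝ (entF d hd) e (Pi.single i 1) =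
      ((i : ℕ) + 1 : ℝ) * JJ d (gi d i) 1 (d - 1 - (i : ℕ)) e -
      ∑ k : Fin d, ((k : ℕ) + 1 : ℝ) * (e k *
        JJ d (fun _ => 0) 2 ((d - 1 - (k : ℕ)) + (d - 1 - (i : ℕ))) e) := by
  have hJ := fun k : Fin d => JJ_fderiv d hd (gi d k) 1 (d - 1 - (k : ℕ)) le_rfl (by omega)
    (gi_meas d k) e he (gi_int d hd k e he)
  have h := HasFDerivAt.fun_sum (u := Finset.univ) fun (k : Fin d) _ =>
    (((pr d k).hasFDerivAt (x := e)).mul (hJ k)).const_mul ((k : ℕ) + 1 : ℝ)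
  have hev : entF d hd =ᶠ[nhds e] fun x => ∑ k : Fin d, ((k : ℕ) + 1 : ℝ) *
      ((pr d k) x * JJ d (gi d k) 1 (d - 1 - (k : ℕ)) x) := by
    filter_upwards [(UU_open d).mem_nhds ((mem_UU d e).2 he)] with x hx
    exact entF_eq d hd x ((mem_UU d x).1 hx)
  rw [(h.congr_of_eventuallyEq hev).fderiv]
  simp [Pi.single_apply, Finset.sum_add_distrib]
  ring

/-- Second partial derivatives. -/
lemma fderiv2_entF (d : ℕ) (hd : 2 ≤ d) (e : Fin d → ℝ) (he : ∀ i, 0 < e i) (i j : Fin d) :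
    fderiv ℝ (fun x => fderiv ℝ (entF d hd) x (Pi.single i 1)) e (Pi.single j 1) =
      - JJ d (fun _ => 0) 2 ((d - 1 - (i : ℕ)) + (d - 1 - (j : ℕ))) e := by
  have hK := JJ_fderiv d hd (gi d i) 1 (d - 1 - (i : ℕ)) le_rfl (by omega)
    (gi_meas d i) e he (gi_int d hd i e he)
  have hJ := fun k : Fin d => JJ_fderiv d hd (fun _ => 0) 2 ((d - 1 - (k : ℕ)) + (d - 1 - (i : ℕ)))
    (by omega) (by omega) measurable_const e he (integrable_J0 d hd e he _ _ (by omega))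
  have h := (hK.const_mul ((i : ℕ) + 1 : ℝ)).sub
    (HasFDerivAt.fun_sum (u := Finset.univ) fun (k : Fin d) _ =>
    (((pr d k).hasFDerivAt (x := e)).mul (hJ k)).const_mul ((k : ℕ) + 1 : ℝ))
  have hev : (fun x => fderiv ℝ (entF d hd) x (Pi.single i 1)) =ᶠ[nhds e] fun x =>
      ((i : ℕ) + 1 : ℝ) * JJ d (gi d i) 1 (d - 1 - (i : ℕ)) x -
      ∑ k : Fin d, ((k : ℕ) + 1 : ℝ) * ((pr d k) x *
        JJ d (fun _ => 0) 2 ((d - 1 - (k : ℕ)) + (d - 1 - (i : ℕ))) x) := by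
    filter_upwards [(UU_open d).mem_nhds ((mem_UU d e).2 he)] with x hx
    exact fderiv_entF d hd x ((mem_UU d x).1 hx) i
  rw [(h.congr_of_eventuallyEq hev).fderiv]
  have hi := ibp d hd e he i j
  have hi' : ∑ k : Fin d, ((k : ℕ) + 1 : ℝ) * (e k * (2 *
      JJ d (fun _ => 0) 3 ((d - 1 - (k : ℕ)) + (d - 1 - (i : ℕ)) + (d - 1 - (j : ℕ))) e)) =
    ((i : ℕ) + (j : ℕ) + 1 : ℝ) *
      JJ d (fun _ => 0) 2 ((d - 1 - (i : ℕ)) + (d - 1 - (j : ℕ))) e := by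
    rw [← hi, Finset.mul_sum]
    exact Finset.sum_congr rfl fun k _ => by ring
  simp [Pi.single_apply, Finset.sum_add_distrib]
  rw [hi', add_comm (d - 1 - (j : ℕ))]
  ring

lemma iter_step (d : ℕ) (hd : 2 ≤ d) (e : Fin d → ℝ) (he : ∀ i, 0 < e i) (n : ℕ)
    (v : Fin (n + 1) → Fin d → ℝ) :
    iteratedFDeriv ℝ (n + 1) (entF d hd) e v =
      fderiv ℝ (fun x => iteratedFDeriv ℝ n (entF d hd) x (Fin.tail v)) e (v 0) := by
  have hc : ContDiffAt ℝ ((n + 1 : ℕ) : WithTop ℕ∞) (entF d hd) e :=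
    (entF_contDiff d hd (n + 1)).contDiffAt ((UU_open d).mem_nhds ((mem_UU d e).2 he))
  have hdiff : DifferentiableAt ℝ (iteratedFDeriv ℝ n (entF d hd)) e :=
    (hc.iteratedFDeriv_right (m := 1) (i := n) (by norm_cast; omega)).differentiableAt (by simp)
  rw [iteratedFDeriv_succ_apply_left, fderiv_continuousMultilinear_apply_const_apply hdiff]

lemma main_formula (d : ℕ) (hd : 2 ≤ d) (n : ℕ) : ∀ (e : Fin d → ℝ) (_ : ∀ i, 0 < e i)
    (idx : Fin (n + 2) → Fin d),
    iteratedFDeriv ℝ (n + 2) (entF d hd) e (fun j => Pi.single (idx j) 1) =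
      (-1 : ℝ) ^ (n + 1) * (n + 1).factorial *
        JJ d (fun _ => 0) (n + 2) (∑ j, (d - 1 - (idx j : ℕ))) e := by
  induction n with
  | zero =>
    intro e he idx
    rw [iter_step d hd e he]
    have : (fun x => iteratedFDeriv ℝ (0 + 1) (entF d hd) x
        (Fin.tail fun j => (Pi.single (idx j) (1 : ℝ) : Fin d → ℝ))) =ᶠ[nhds e]
        fun x => fderiv ℝ (entF d hd) x (Pi.single (idx 1) 1) := by
      refine Filter.Eventually.of_forall fun x => ?_
      simp [Fin.tail]
    rw [this.fderiv_eq, fderiv2_entF d hd e he]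
    simp [Fin.sum_univ_two, add_comm]
  | succ n ih =>
    intro e he idx
    rw [iter_step d hd e he]
    have hle : (∑ j : Fin (n + 2), (d - 1 - (idx j.succ : ℕ))) + 2 ≤ (n + 2) * d := by
      have : ∑ j : Fin (n + 2), (d - 1 - (idx j.succ : ℕ)) ≤ ∑ j : Fin (n + 2), (d - 1) :=
        Finset.sum_le_sum fun j _ => by omega
      simp only [Finset.sum_const, Finset.card_univ, Fintype.card_fin, smul_eq_mul] at this
      obtain ⟨c, rfl⟩ : ∃ c, d = c + 1 := ⟨d - 1, by omega⟩
      simp only [Nat.add_sub_cancel] at this ⊢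
      nlinarith
    have : (fun x => iteratedFDeriv ℝ (n + 2) (entF d hd) x
        (Fin.tail fun j => (Pi.single (idx j) (1 : ℝ) : Fin d → ℝ))) =ᶠ[nhds e]
        fun x => (-1 : ℝ) ^ (n + 1) * (n + 1).factorial *
        JJ d (fun _ => 0) (n + 2) (∑ j : Fin (n + 2), (d - 1 - (idx j.succ : ℕ))) x := by
      filter_upwards [(UU_open d).mem_nhds ((mem_UU d e).2 he)] with x hx
      exact ih x ((mem_UU d x).1 hx) (fun j => idx j.succ)
    obtain ⟨h1, h2⟩ := fderiv_JJ_single d hd (n + 2) _ (by omega) hle e he (idx 0)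
    have hsum : ∑ j, (d - 1 - (idx j : ℕ)) =
        ∑ j : Fin (n + 2), (d - 1 - (idx j.succ : ℕ)) + (d - 1 - (idx 0 : ℕ)) := by
      rw [Fin.sum_univ_succ, add_comm]
    rw [this.fderiv_eq, fderiv_const_mul h1, hsum]
    simp only [ContinuousLinearMap.smul_apply, h2, smul_eq_mul]
    rw [Nat.factorial_succ (n + 1)]
    push_cast
    ring

/-- **Higher derivatives of the entropy in the symmetric-polynomial variables.**
For `m ≥ 2` and indices `i₁, …, i_m ∈ {1, …, d}` (here `idx j : Fin d` encodes
the index `(idx j) + 1`), the `m`-th mixed partial derivative of `F` equals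
`(−1)^{m−1}(m−1)! ∫₀^∞ τ^{md−(i₁+⋯+i_m)}/q_e(τ)^m dτ`; in particular it
depends only on the sum `i₁ + ⋯ + i_m` of the indices. -/
theorem entropy_higher_derivatives (d : ℕ) (hd : 2 ≤ d)
    (e : Fin d → ℝ) (he : ∀ i, 0 < e i) (m : ℕ) (hm : 2 ≤ m)
    (idx : Fin m → Fin d) :
    iteratedFDeriv ℝ m (entF d hd) e (fun j => Pi.single (idx j) 1) =
        (-1 : ℝ) ^ (m - 1) * (m - 1).factorial *
          ∫ τ in Set.Ioi (0 : ℝ),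
            τ ^ (m * d - ∑ j, ((idx j : ℕ) + 1)) / (qe d e τ) ^ m ∧
    ∀ idx' : Fin m → Fin d, (∑ j, ((idx j : ℕ) + 1)) = (∑ j, ((idx' j : ℕ) + 1)) →
      iteratedFDeriv ℝ m (entF d hd) e (fun j => Pi.single (idx j) 1) =
        iteratedFDeriv ℝ m (entF d hd) e (fun j => Pi.single (idx' j) 1) := by
  have key : ∀ idx : Fin m → Fin d,
      iteratedFDeriv ℝ m (entF d hd) e (fun j => Pi.single (idx j) 1) =
        (-1 : ℝ) ^ (m - 1) * (m - 1).factorial *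
          ∫ τ in Set.Ioi (0 : ℝ),
            τ ^ (m * d - ∑ j, ((idx j : ℕ) + 1)) / (qe d e τ) ^ m := by
    obtain ⟨n, rfl⟩ : ∃ n, m = n + 2 := ⟨m - 2, by omega⟩
    intro idx
    rw [main_formula d hd n e he idx]
    have hs : (n + 2) * d - ∑ j, ((idx j : ℕ) + 1) = ∑ j, (d - 1 - (idx j : ℕ)) := by
      have : ∑ j, (d - 1 - (idx j : ℕ)) + ∑ j, ((idx j : ℕ) + 1) = (n + 2) * d := by
        rw [← Finset.sum_add_distrib, Finset.sum_congr rfl (g := fun _ => d) fun j _ => by omega]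
        simp
      omega
    rw [hs]
    simp [JJ]
  refine ⟨key idx, fun idx' h => ?_⟩
  rw [key idx, key idx', h]
end
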